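/- There exists a constant c > 0 such that for all integers d, z, ℓ ≥ 1, every ε ∈ (0,1), every r > 0, and every sequence π of z points in ℝ^d, there exists a finite set S of sequences of ℓ points in ℝ^d with |S| ≤ 4^ℓ · (c/ε)^{d·ℓ} such that for every sequence τ of ℓ points in ℝ^d with d_dF(π,τ) ≤ r there exists τ' ∈ S with d_dF(τ,τ') ≤ ε·r. -/

import Mathlib

/-!
Fix one curve `τ₀` of complexity `ℓ` in the Fréchet ball (if there is none, `S = ∅` works). A
traversal between `π` and `τ` followed by one between `π` and `τ₀` yields, for every curve `τ` in
the ball, a monotone map `f : Fin ℓ → Fin ℓ` such that the `j`-th point of `τ` is close to the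
`f j`-th point of `τ₀` (`exists_monotone_close`). To avoid showing that the infimum defining the
distance is attained, traversals of cost below `2r` are used, so that close means within `4r`.

There are at most `4 ^ ℓ` monotone maps `Fin ℓ → Fin ℓ`, because `f` is determined by the set
`{j + f j} ⊆ {0, …, 2ℓ - 1}` (`card_monotone_le`), and a volume comparison shows that a ball of
radius `4r` has an `εr`-net `N` of at most `(9 / ε) ^ d` points (`exists_net`). The cover consists
of the curves `j ↦ τ₀ (f j) + u j` with `f` monotone and `u : Fin ℓ → N`; the diagonal traversal
bounds the Fréchet distance between `τ` and a suitable one of them. Thus `c = 9` works. In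
particular the count does not depend on `z`.
-/

/-- A traversal between lengths `z` and `ℓ` (1-based indices). -/
def IsTraversal (z ℓ : ℕ) (T : List (ℕ × ℕ)) : Prop :=
  T.head? = some (1, 1) ∧ T.getLast? = some (z, ℓ) ∧
  T.Chain' (fun p q =>
    (q.1 = p.1 ∨ q.1 = p.1 + 1) ∧ (q.2 = p.2 ∨ q.2 = p.2 + 1) ∧
    (q.1 = p.1 + 1 ∨ q.2 = p.2 + 1))

/-- Discrete Fréchet distance between curves of complexities `z` and `ℓ`. -/
noncomputable def dFrechet {E : Type*} [PseudoMetricSpace E] (z ℓ : ℕ)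
    (p q : ℕ → E) : ℝ :=
  sInf {r : ℝ | ∃ T : List (ℕ × ℕ), IsTraversal z ℓ T ∧
    r = (T.map (fun ij => dist (p ij.1) (q ij.2))).foldr max 0}

/-! ### Traversals -/

/-- Extending a traversal by one admissible step. -/
lemma IsTraversal.snoc {z l : ℕ} {T : List (ℕ × ℕ)} (h : IsTraversal z l T) {a b : ℕ}
    (ha : a = z ∨ a = z + 1) (hb : b = l ∨ b = l + 1) (hab : a = z + 1 ∨ b = l + 1) :
    IsTraversal a b (T ++ [(a, b)]) := by
  obtain ⟨h1, h2, h3⟩ := h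
  refine ⟨by simp [h1], by simp, ?_⟩
  refine List.IsChain.append h3 (by simp) ?_
  intro x hx y hy
  rw [h2] at hx
  simp only [Option.mem_def, Option.some.injEq, List.head?_cons] at hx hy
  subst hx hy
  exact ⟨ha, hb, hab⟩

lemma isTraversal_one : IsTraversal 1 1 [(1, 1)] := by
  refine ⟨by simp, by simp, ?_⟩
  exact List.isChain_singleton _

lemma exists_isTraversal {z l : ℕ} (hz : 1 ≤ z) (hl : 1 ≤ l) : ∃ T, IsTraversal z l T := by
  have h1 : ∃ T, IsTraversal z 1 T := by
    induction z, hz using Nat.le_induction with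
    | base => exact ⟨_, isTraversal_one⟩
    | succ n hn ih =>
      obtain ⟨T, hT⟩ := ih
      exact ⟨_, hT.snoc (a := n + 1) (b := 1) (by simp) (by simp) (by simp)⟩
  induction l, hl using Nat.le_induction with
  | base => exact h1
  | succ n hn ih =>
    obtain ⟨T, hT⟩ := ih
    exact ⟨_, hT.snoc (a := z) (b := n + 1) (by simp) (by simp) (by simp)⟩

lemma exists_diagonal_traversal {l : ℕ} (hl : 1 ≤ l) :
    ∃ T, IsTraversal l l T ∧ ∀ p ∈ T, p.1 = p.2 ∧ 1 ≤ p.1 ∧ p.1 ≤ l := by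
  induction l, hl using Nat.le_induction with
  | base => exact ⟨_, isTraversal_one, by simp⟩
  | succ n hn ih =>
    obtain ⟨T, hT, h⟩ := ih
    refine ⟨_, hT.snoc (a := n + 1) (b := n + 1) (by simp) (by simp) (by simp), ?_⟩
    intro p hp
    rcases List.mem_append.1 hp with hp | hp
    · have := h p hp
      omega
    · simp only [List.mem_singleton] at hp
      subst hp
      simp

/-- Along a traversal both indices are nondecreasing, so any two of its pairs are comparable. -/
lemma IsTraversal.comparable {z l : ℕ} {T : List (ℕ × ℕ)} (h : IsTraversal z l T)
    {p q : ℕ × ℕ} (hp : p ∈ T) (hq : q ∈ T) : p ≤ q ∨ q ≤ p := by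
  have hc : T.IsChain (· ≤ ·) := by
    refine List.IsChain.imp ?_ h.2.2
    rintro a b ⟨h1, h2, -⟩
    exact Prod.le_def.2 ⟨by omega, by omega⟩
  have hpw : T.Pairwise (fun a b => a ≤ b ∨ b ≤ a) := hc.pairwise.imp fun h => Or.inl h
  have hsymm : Std.Symm fun a b : ℕ × ℕ => a ≤ b ∨ b ≤ a := ⟨fun _ _ h => h.symm⟩
  exact List.Pairwise.forall_of_forall (R := fun a b : ℕ × ℕ => a ≤ b ∨ b ≤ a)
    (fun _ _ => Or.inl le_rfl) hpw hp hq

/-- A chain of unit steps in a coordinate `φ` takes every value of `φ` between its first and its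
last one, and no others. -/
lemma chain_coordinate (φ : ℕ × ℕ → ℕ) :
    ∀ (T : List (ℕ × ℕ)) (a e : ℕ × ℕ),
      (a :: T).IsChain (fun p q => φ q = φ p ∨ φ q = φ p + 1) → (a :: T).getLast? = some e →
      (∀ i, φ a ≤ i → i ≤ φ e → ∃ p ∈ a :: T, φ p = i) ∧
        ∀ p ∈ a :: T, φ a ≤ φ p ∧ φ p ≤ φ e
  | [], a, e, _, he => by
    simp only [List.getLast?_singleton, Option.some.injEq] at he
    subst he
    exact ⟨fun i h1 h2 => ⟨a, by simp, le_antisymm h1 h2⟩, by simp⟩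
  | b :: T, a, e, hc, he => by
    rw [List.isChain_cons_cons] at hc
    rw [List.getLast?_cons_cons] at he
    obtain ⟨ih1, ih2⟩ := chain_coordinate φ T b e hc.2 he
    have hb := ih2 b (by simp)
    constructor
    · intro i h1 h2
      by_cases hi : i = φ a
      · exact ⟨a, by simp, hi.symm⟩
      · obtain ⟨p, hp, hpi⟩ := ih1 i (by omega) h2
        exact ⟨p, List.mem_cons_of_mem _ hp, hpi⟩
    · intro p hp
      rcases List.mem_cons.1 hp with rfl | hp
      · omega
      · have := ih2 p hp
        omega

/-- Every pair of a traversal lies in the index range, and each value of either index occurs. -/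
lemma IsTraversal.coverage {z l : ℕ} {T : List (ℕ × ℕ)} (h : IsTraversal z l T) :
    (∀ i, 1 ≤ i → i ≤ z → ∃ j, (i, j) ∈ T) ∧ (∀ j, 1 ≤ j → j ≤ l → ∃ i, (i, j) ∈ T) ∧
      ∀ p ∈ T, (1 ≤ p.1 ∧ p.1 ≤ z) ∧ 1 ≤ p.2 ∧ p.2 ≤ l := by
  obtain ⟨h1, h2, h3⟩ := h
  cases T with
  | nil => simp at h1
  | cons a T =>
    simp only [List.head?_cons, Option.some.injEq] at h1
    subst h1
    obtain ⟨a1, a2⟩ := chain_coordinate Prod.fst T _ _ (List.IsChain.imp (fun _ _ h => h.1) h3) h2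
    obtain ⟨b1, b2⟩ :=
      chain_coordinate Prod.snd T _ _ (List.IsChain.imp (fun _ _ h => h.2.1) h3) h2
    refine ⟨fun i hi hi' => ?_, fun j hj hj' => ?_, fun p hp => ⟨a2 p hp, b2 p hp⟩⟩
    · obtain ⟨⟨_, j⟩, hp, rfl⟩ := a1 i hi hi'
      exact ⟨j, hp⟩
    · obtain ⟨⟨i, _⟩, hp, rfl⟩ := b1 j hj hj'
      exact ⟨i, hp⟩

/-! ### The cost of a traversal and the Fréchet distance -/

lemma foldr_max_nonneg (L : List ℝ) : 0 ≤ L.foldr max 0 := by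
  induction L with
  | nil => simp
  | cons a L ih => exact le_max_of_le_right ih

lemma le_foldr_max (L : List ℝ) : ∀ x ∈ L, x ≤ L.foldr max 0 := by
  induction L with
  | nil => simp
  | cons a L ih =>
    intro x hx
    rcases List.mem_cons.1 hx with rfl | hx
    · exact le_max_left _ _
    · exact (ih x hx).trans (le_max_right _ _)

lemma foldr_max_le (L : List ℝ) (b : ℝ) (hb : 0 ≤ b) (h : ∀ x ∈ L, x ≤ b) :
    L.foldr max 0 ≤ b := by
  induction L with
  | nil => simpa
  | cons a L ih =>
    exact max_le (h a (by simp)) (ih fun x hx => h x (List.mem_cons_of_mem _ hx))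

lemma exists_traversal_of_dFrechet_lt {E : Type*} [PseudoMetricSpace E] {z l : ℕ} (hz : 1 ≤ z)
    (hl : 1 ≤ l) {p q : ℕ → E} {R : ℝ} (h : dFrechet z l p q < R) :
    ∃ T, IsTraversal z l T ∧ ∀ ij ∈ T, dist (p ij.1) (q ij.2) < R := by
  obtain ⟨T₁, hT₁⟩ := exists_isTraversal hz hl
  unfold dFrechet at h
  obtain ⟨x, ⟨T, hT, rfl⟩, hx⟩ := exists_lt_of_csInf_lt (by exact ⟨_, T₁, hT₁, rfl⟩) h
  refine ⟨T, hT, fun ij hij => lt_of_le_of_lt ?_ hx⟩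
  exact le_foldr_max _ _ (List.mem_map.2 ⟨ij, hij, rfl⟩)

/-- The diagonal traversal bounds the Fréchet distance by the pointwise distance. -/
lemma dFrechet_le_of_pointwise {E : Type*} [PseudoMetricSpace E] {l : ℕ} (hl : 1 ≤ l)
    {p q : ℕ → E} {R : ℝ} (hR : 0 ≤ R) (h : ∀ j, 1 ≤ j → j ≤ l → dist (p j) (q j) ≤ R) :
    dFrechet l l p q ≤ R := by
  obtain ⟨T, hT, hd⟩ := exists_diagonal_traversal hl
  unfold dFrechet
  refine le_trans (csInf_le ⟨0, ?_⟩ ⟨T, hT, rfl⟩) (foldr_max_le _ _ hR ?_)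
  · rintro _ ⟨T', -, rfl⟩
    exact foldr_max_nonneg _
  · intro x hx
    obtain ⟨⟨i, j⟩, hij, rfl⟩ := List.mem_map.1 hx
    obtain ⟨he, h1, h2⟩ := hd _ hij
    rw [← he]
    exact h _ h1 h2

/-- Composing a traversal between `π` and `τ` with one between `π` and `σ` gives a monotone
matching of the points of `τ` to points of `σ`. Indices are shifted by one, since curves are
indexed from `1`. -/
lemma exists_monotone_close {E : Type*} [PseudoMetricSpace E] {z l : ℕ} (hz : 1 ≤ z)
    (hl : 1 ≤ l) {π τ σ : ℕ → E} {R : ℝ} (h : dFrechet z l π τ < R)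
    (h' : dFrechet z l π σ < R) :
    ∃ f : Fin l → Fin l, Monotone f ∧ ∀ j : Fin l, dist (τ (j + 1)) (σ (f j + 1)) ≤ 2 * R := by
  obtain ⟨T, hT, hTd⟩ := exists_traversal_of_dFrechet_lt hz hl h
  obtain ⟨U, hU, hUd⟩ := exists_traversal_of_dFrechet_lt hz hl h'
  have hex : ∀ j : Fin l, ∃ i k, (i, (j : ℕ) + 1) ∈ T ∧ (i, k) ∈ U := by
    intro j
    obtain ⟨i, hi⟩ := hT.coverage.2.1 (j + 1) (by omega) (by omega)
    have hi' := (hT.coverage.2.2 _ hi).1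
    obtain ⟨k, hk⟩ := hU.coverage.1 i hi'.1 hi'.2
    exact ⟨i, k, hi, hk⟩
  choose g hg using hex
  -- `w` depends on `i` alone, so that indices `j` sharing the same `g j` get the same image.
  have hex2 : ∀ i, ∃ k, (∃ k', (i, k') ∈ U) → (i, k) ∈ U := by
    intro i
    by_cases hi : ∃ k', (i, k') ∈ U
    · exact ⟨hi.choose, fun _ => hi.choose_spec⟩
    · exact ⟨0, fun h => absurd h hi⟩
  choose w hw using hex2
  have hgT : ∀ j : Fin l, (g j, (j : ℕ) + 1) ∈ T := fun j => (hg j).choose_spec.1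
  have hgU : ∀ j : Fin l, (g j, w (g j)) ∈ U := fun j => hw _ ⟨_, (hg j).choose_spec.2⟩
  have hwr : ∀ j : Fin l, 1 ≤ w (g j) ∧ w (g j) ≤ l := fun j => (hU.coverage.2.2 _ (hgU j)).2
  refine ⟨fun j => ⟨w (g j) - 1, by have := hwr j; omega⟩, ?_, ?_⟩
  · intro a b hab
    rcases hab.eq_or_lt with rfl | hab
    · exact le_rfl
    have hab' : (a : ℕ) < b := hab
    have hgm : g a ≤ g b := by
      rcases hT.comparable (hgT a) (hgT b) with h | h
      · exact h.1
      · have := h.2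
        simp only at this
        omega
    have hwm : w (g a) ≤ w (g b) := by
      rcases hU.comparable (hgU a) (hgU b) with h | h
      · exact h.2
      · have hge : g a = g b := le_antisymm hgm h.1
        rw [hge]
    rw [Fin.le_def]
    simp only
    omega
  · intro j
    have h1 := hTd _ (hgT j)
    have h2 := hUd _ (hgU j)
    have h3 : w (g j) - 1 + 1 = w (g j) := by have := hwr j; omega
    simp only [h3]
    simp only at h1 h2
    have := dist_triangle_left (τ (j + 1)) (σ (w (g j))) (π (g j))
    linarith

/-! ### Counting monotone maps -/

/-- A monotone `f` is recovered from the range of the strictly monotone map `j ↦ j + f j`. -/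
lemma card_monotone_le (l : ℕ) : Nat.card {f : Fin l → Fin l // Monotone f} ≤ 4 ^ l := by
  let s : {f : Fin l → Fin l // Monotone f} → Fin l → Fin (2 * l) :=
    fun f j => ⟨j + f.1 j, by omega⟩
  have hs : ∀ f, StrictMono (s f) := by
    intro f a b hab
    have h1 : (f.1 a : ℕ) ≤ f.1 b := f.2 hab.le
    have h2 : (a : ℕ) < b := hab
    simp only [s, Fin.lt_def]
    omega
  have hinj : Function.Injective fun f => Set.range (s f) := by
    intro f g hfg
    have h := (StrictMono.range_inj (hs f) (hs g)).1 hfg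
    ext j
    have hj := congrArg Fin.val (congrFun h j)
    simp only [s] at hj
    omega
  calc Nat.card {f : Fin l → Fin l // Monotone f}
      ≤ Nat.card (Set (Fin (2 * l))) := Nat.card_le_card_of_injective _ hinj
    _ = 4 ^ l := by
      rw [Nat.card_eq_fintype_card, Fintype.card_set, Fintype.card_fin, pow_mul]
      norm_num

/-! ### Nets of balls in Euclidean space -/

open MeasureTheory Metric Module in
/-- Volume bound for separated sets: the balls of radius `δ / 2` around the points of `s` are
disjoint and contained in the ball of radius `R + δ / 2`. -/
lemma card_separated_le {E : Type*} [NormedAddCommGroup E] [NormedSpace ℝ E]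
    [FiniteDimensional ℝ E] {R δ : ℝ} (hR : 0 ≤ R) (hδ : 0 < δ) (s : Finset E)
    (hs : ∀ c ∈ s, ‖c‖ ≤ R) (h : ∀ c ∈ s, ∀ d ∈ s, c ≠ d → δ ≤ ‖c - d‖) :
    (s.card : ℝ) ≤ ((R + δ / 2) / (δ / 2)) ^ finrank ℝ E := by
  borelize E
  let μ : Measure E := Measure.addHaar
  have hδ2 : 0 < δ / 2 := by positivity
  have hρ : 0 < R + δ / 2 := by positivity
  have D : Set.Pairwise (s : Set E) (Function.onFun Disjoint fun c => ball (c : E) (δ / 2)) := by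
    intro c hc d hd hcd
    apply ball_disjoint_ball
    rw [dist_eq_norm]
    have := h c hc d hd hcd
    linarith
  have hsub : (⋃ c ∈ s, ball (c : E) (δ / 2)) ⊆ ball (0 : E) (R + δ / 2) := by
    refine Set.iUnion₂_subset fun x hx => ball_subset_ball' ?_
    rw [dist_zero_right]
    linarith [hs x hx]
  have I : (s.card : ENNReal) * ENNReal.ofReal ((δ / 2) ^ finrank ℝ E) * μ (ball 0 1) ≤
      ENNReal.ofReal ((R + δ / 2) ^ finrank ℝ E) * μ (ball 0 1) :=
    calc
      _ = μ (⋃ c ∈ s, ball (c : E) (δ / 2)) := by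
        rw [measure_biUnion_finset D fun c _ => measurableSet_ball]
        simp only [μ.addHaar_ball_of_pos _ hδ2, Finset.sum_const, nsmul_eq_mul, mul_assoc]
      _ ≤ μ (ball (0 : E) (R + δ / 2)) := measure_mono hsub
      _ = _ := by simp only [μ.addHaar_ball_of_pos _ hρ]
  have J := (ENNReal.mul_le_mul_iff_left (measure_ball_pos μ _ zero_lt_one).ne'
    measure_ball_lt_top.ne).1 I
  have K := ENNReal.toReal_le_of_le_ofReal (pow_nonneg hρ.le _) J
  rw [ENNReal.toReal_mul, ENNReal.toReal_ofReal (pow_nonneg hδ2.le _)] at K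
  rw [div_pow, le_div_iff₀ (pow_pos hδ2 _)]
  simpa using K

/-- A separated subset of the ball of maximal cardinality is a net. -/
lemma exists_net {E : Type*} [NormedAddCommGroup E] [NormedSpace ℝ E]
    [FiniteDimensional ℝ E] {R δ : ℝ} (hR : 0 ≤ R) (hδ : 0 < δ) :
    ∃ N : Finset E, (N.card : ℝ) ≤ ((R + δ / 2) / (δ / 2)) ^ Module.finrank ℝ E ∧
      ∀ x : E, ‖x‖ ≤ R → ∃ y ∈ N, ‖x - y‖ ≤ δ := by
  classical
  let P : Set ℕ := {n | ∃ s : Finset E, s.card = n ∧ (∀ c ∈ s, ‖c‖ ≤ R) ∧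
    ∀ c ∈ s, ∀ d ∈ s, c ≠ d → δ ≤ ‖c - d‖}
  have hne : P.Nonempty := ⟨0, ∅, by simp⟩
  have hbd : BddAbove P := by
    refine ⟨⌊((R + δ / 2) / (δ / 2)) ^ Module.finrank ℝ E⌋₊, ?_⟩
    rintro _ ⟨s, rfl, h1, h2⟩
    exact Nat.le_floor (card_separated_le hR hδ s h1 h2)
  obtain ⟨N, hN, h1, h2⟩ := Nat.sSup_mem hne hbd
  refine ⟨N, card_separated_le hR hδ N h1 h2, fun x hx => ?_⟩
  by_contra! hcon
  have hxN : x ∉ N := fun hxN => by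
    have := hcon x hxN
    simp only [sub_self, norm_zero] at this
    linarith
  have hmem : (insert x N).card ∈ P := by
    refine ⟨insert x N, rfl, ?_, ?_⟩
    · intro c hc
      rcases Finset.mem_insert.1 hc with rfl | hc
      exacts [hx, h1 c hc]
    · intro c hc d hd hcd
      rcases Finset.mem_insert.1 hc with rfl | hc' <;> rcases Finset.mem_insert.1 hd with rfl | hd'
      · exact absurd rfl hcd
      · exact (hcon d hd').le
      · rw [norm_sub_rev]
        exact (hcon c hc').le
      · exact h2 c hc' d hd' hcd
  have := le_csSup hbd hmem
  rw [Finset.card_insert_of_notMem hxN, hN] at this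
  omega

/-! ### The cover -/

/-- candidate-center covering lemma.  The set of complexity-`ℓ`
curves within discrete Fréchet distance `r` of a complexity-`z` curve `π` admits
an `εr`-cover of size at most `4^ℓ·(c/ε)^{dℓ}`. -/
theorem stmt16 :
    ∃ c : ℝ, 0 < c ∧
      ∀ (d z ℓ : ℕ), 1 ≤ d → 1 ≤ z → 1 ≤ ℓ →
        ∀ ε : ℝ, ε ∈ Set.Ioo (0 : ℝ) 1 →
        ∀ r : ℝ, 0 < r →
        ∀ π : ℕ → EuclideanSpace ℝ (Fin d),
          ∃ S : Set (ℕ → EuclideanSpace ℝ (Fin d)),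
            S.Finite ∧
            (S.ncard : ℝ) ≤ 4 ^ ℓ * (c / ε) ^ (d * ℓ) ∧
            ∀ τ : ℕ → EuclideanSpace ℝ (Fin d),
              dFrechet z ℓ π τ ≤ r →
              ∃ τ' ∈ S, dFrechet ℓ ℓ τ τ' ≤ ε * r := by
  refine ⟨9, by norm_num, ?_⟩
  intro d z ℓ _ hz hl ε hε r hr π
  obtain ⟨hε0, hε1⟩ := hε
  by_cases hex : ∃ τ₀, dFrechet z ℓ π τ₀ ≤ r
  swap
  · exact ⟨∅, Set.finite_empty, by simp; positivity, fun τ hτ => absurd ⟨τ, hτ⟩ hex⟩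
  obtain ⟨τ₀, hτ₀⟩ := hex
  have hεr : 0 < ε * r := mul_pos hε0 hr
  obtain ⟨N, hNc, hN⟩ := exists_net (E := EuclideanSpace ℝ (Fin d)) (R := 2 * (2 * r))
    (by positivity) hεr
  have hNc' : (N.card : ℝ) ≤ (9 / ε) ^ d := by
    rw [finrank_euclideanSpace_fin] at hNc
    refine hNc.trans (pow_le_pow_left₀ (by positivity) ?_ _)
    rw [div_le_div_iff₀ (by positivity) hε0]
    nlinarith
  let C : {f : Fin ℓ → Fin ℓ // Monotone f} × (Fin ℓ → N) → ℕ → EuclideanSpace ℝ (Fin d) :=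
    fun fu n => if h : n - 1 < ℓ then τ₀ (fu.1.1 ⟨n - 1, h⟩ + 1) + fu.2 ⟨n - 1, h⟩ else 0
  refine ⟨Set.range C, Set.finite_range C, ?_, ?_⟩
  · have h1 : (Set.range C).ncard ≤ 4 ^ ℓ * N.card ^ ℓ := by
      calc (Set.range C).ncard
          ≤ Nat.card ({f : Fin ℓ → Fin ℓ // Monotone f} × (Fin ℓ → N)) :=
            Finite.card_range_le C
        _ = Nat.card {f : Fin ℓ → Fin ℓ // Monotone f} * N.card ^ ℓ := by
            rw [Nat.card_prod, Nat.card_fun]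
            simp
        _ ≤ _ := Nat.mul_le_mul_right _ (card_monotone_le ℓ)
    calc ((Set.range C).ncard : ℝ) ≤ 4 ^ ℓ * (N.card : ℝ) ^ ℓ := by exact_mod_cast h1
      _ ≤ 4 ^ ℓ * ((9 / ε) ^ d) ^ ℓ := by gcongr
      _ = _ := by rw [← pow_mul]
  · intro τ hτ
    obtain ⟨f, hf, hfd⟩ := exists_monotone_close hz hl (R := 2 * r) (π := π) (τ := τ) (σ := τ₀)
      (by linarith) (by linarith)
    have hu : ∀ j : Fin ℓ, ∃ y : N, ‖τ (j + 1) - τ₀ (f j + 1) - y‖ ≤ ε * r := by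
      intro j
      obtain ⟨y, hy, hy'⟩ := hN (τ (j + 1) - τ₀ (f j + 1)) (by
        rw [← dist_eq_norm]
        exact hfd j)
      exact ⟨⟨y, hy⟩, hy'⟩
    choose u hu using hu
    refine ⟨C (⟨f, hf⟩, u), ⟨_, rfl⟩, dFrechet_le_of_pointwise hl hεr.le ?_⟩
    intro j hj hjl
    have hj' : j - 1 < ℓ := by omega
    have h := hu ⟨j - 1, hj'⟩
    simp only [Nat.sub_add_cancel hj] at h
    simp only [C, hj', dite_true, dist_eq_norm]
    rwa [← sub_sub]
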